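/- Consider the semiparametric contextual bandit problem with two actions under the environment and boundedness assumptions, run with the following strategy: at each round t, if one action is eliminated by the other according to the rule ⟨θ̂_t, z_{t,b} − z_{t,a}⟩ > γ(T)·‖z_{t,a} − z_{t,b}‖_{Γ_t⁻¹}, play the surviving action deterministically; otherwise play one of the two actions uniformly at random; let π_t denote the resulting action distribution and μ_t := E_{a∼π_t}[z_{t,a}]. Assume that ‖θ̂_t − θ‖_{Γ_t} ≤ γ(T) holds for all t ∈ [T]. Then for any δ ∈ (0,1), with probability at least 1 − δ, Reg(T) ≤ √(2T·log(1/δ)) + 2γ(T)·Σ_{t=1}^T √(tr(Γ_t⁻¹ · Cov_{b∼π_t}(z_{t,b}))). -/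

import Mathlib

open MeasureTheory ProbabilityTheory Matrix Finset

/-- Cauchy–Schwarz for the dual pair of norms given by a positive definite matrix and its
inverse. -/
lemma Matrix.PosDef.dotProduct_le_sqrt_mul_sqrt_inv {n : Type*} [Fintype n] [DecidableEq n]
    {G : Matrix n n ℝ} (hG : G.PosDef) (x y : n → ℝ) :
    x ⬝ᵥ y ≤ √(x ⬝ᵥ G *ᵥ x) * √(y ⬝ᵥ G⁻¹ *ᵥ y) := by
  have hGu : IsUnit G.det := (Matrix.isUnit_iff_isUnit_det G).mp hG.isUnit
  have hsymm : Gᵀ = G := by simpa using hG.isHermitian.eq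
  have hGG : G *ᵥ (G⁻¹ *ᵥ y) = y := by
    rw [Matrix.mulVec_mulVec, Matrix.mul_nonsing_inv _ hGu, Matrix.one_mulVec]
  have hquad : ∀ s : ℝ,
      0 ≤ (y ⬝ᵥ G⁻¹ *ᵥ y) * (s * s) + (2 * (x ⬝ᵥ y)) * s + x ⬝ᵥ G *ᵥ x := by
    intro s
    have h := hG.posSemidef.dotProduct_mulVec_nonneg (x + s • (G⁻¹ *ᵥ y))
    have hcross : (G⁻¹ *ᵥ y) ⬝ᵥ (G *ᵥ x) = x ⬝ᵥ y := by
      rw [Matrix.dotProduct_mulVec, ← Matrix.mulVec_transpose, hsymm, hGG, dotProduct_comm]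
    have hself : (G⁻¹ *ᵥ y) ⬝ᵥ y = y ⬝ᵥ G⁻¹ *ᵥ y := dotProduct_comm _ _
    simp only [star_trivial, Matrix.mulVec_add, Matrix.mulVec_smul, hGG, add_dotProduct,
      dotProduct_add, smul_dotProduct, dotProduct_smul, smul_eq_mul, hcross, hself] at h
    linarith
  have hdisc := discrim_le_zero hquad
  rw [discrim] at hdisc
  have hx : 0 ≤ x ⬝ᵥ G *ᵥ x := by simpa using hG.posSemidef.dotProduct_mulVec_nonneg x
  rw [← Real.sqrt_mul hx]
  exact Real.le_sqrt_of_sq_le (by linarith)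

/-- A regularized Gram matrix is positive definite. -/
lemma posDef_smul_one_add_sum_vecMulVec {n ι : Type*} [Fintype n] [DecidableEq n] {c : ℝ}
    (hc : 0 < c) (s : Finset ι) (v : ι → n → ℝ) :
    (c • (1 : Matrix n n ℝ) + ∑ i ∈ s, vecMulVec (v i) (v i)).PosDef := by
  refine (Matrix.PosDef.one.smul hc).add_posSemidef ?_
  refine Matrix.posSemidef_sum s fun i _ => ?_
  simpa using Matrix.posSemidef_vecMulVec_self_star (v i)

lemma univ_eq_pair_of_card_eq_two {A : Type*} [Fintype A] [DecidableEq A]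
    (hcard : Fintype.card A = 2) {b c : A} (hbc : b ≠ c) : (univ : Finset A) = {b, c} :=
  (Finset.eq_of_subset_of_card_le (Finset.subset_univ _)
    (by rw [Finset.card_univ, hcard, Finset.card_pair hbc])).symm

lemma dotProduct_le_one_of_sqrt_le_one {n : Type*} [Fintype n] {x y : n → ℝ}
    (hx : √(x ⬝ᵥ x) ≤ 1) (hy : √(y ⬝ᵥ y) ≤ 1) : |x ⬝ᵥ y| ≤ 1 := by
  have hx' : x ⬝ᵥ x ≤ 1 := by simpa using hx
  have hy' : y ⬝ᵥ y ≤ 1 := by simpa using hy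
  have hsub : 0 ≤ (x - y) ⬝ᵥ (x - y) := by
    simpa using dotProduct_star_self_nonneg (x - y)
  have hadd : 0 ≤ (x + y) ⬝ᵥ (x + y) := by
    simpa using dotProduct_star_self_nonneg (x + y)
  simp only [sub_dotProduct, dotProduct_sub, add_dotProduct, dotProduct_add,
    dotProduct_comm y x] at hsub hadd
  exact abs_le.mpr ⟨by linarith, by linarith⟩

section TwoArmRound

variable {A n : Type*} [Fintype A] [DecidableEq A] [Fintype n] [DecidableEq n]
  {G : Matrix n n ℝ} {γ : ℝ} {θh : n → ℝ} {z : A → n → ℝ} {p : A → ℝ} {surv : A → Prop}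

/-- With two arms, either both arms survive and the play is uniform, or one arm strictly beats
the other and is played deterministically. -/
lemma uniform_or_deterministic_of_elimination (hcard : Fintype.card A = 2) (hγ : 0 ≤ γ)
    (hsurv : ∀ b, surv b ↔ ∀ c, θh ⬝ᵥ (z c - z b) ≤ γ * √((z b - z c) ⬝ᵥ G⁻¹ *ᵥ (z b - z c)))
    (hboth : (∀ b, surv b) → ∀ b, p b = 1 / 2)
    (hone : ∀ b, surv b → (∃ c, ¬ surv c) → ∀ c, p c = if c = b then 1 else 0) :
    ((∀ b, surv b) ∧ ∀ b, p b = 1 / 2) ∨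
      ∃ b c, b ≠ c ∧ γ * √((z b - z c) ⬝ᵥ G⁻¹ *ᵥ (z b - z c)) < θh ⬝ᵥ (z b - z c) ∧
        p b = 1 ∧ p c = 0 := by
  by_cases hall : ∀ b, surv b
  · exact Or.inl ⟨hall, hboth hall⟩
  right
  push Not at hall
  obtain ⟨c, hc⟩ := hall
  have hc' := hc
  rw [hsurv] at hc'
  push Not at hc'
  obtain ⟨b, hb⟩ := hc'
  have hnorm : (z c - z b) ⬝ᵥ G⁻¹ *ᵥ (z c - z b) = (z b - z c) ⬝ᵥ G⁻¹ *ᵥ (z b - z c) := by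
    rw [← neg_sub (z b) (z c), Matrix.mulVec_neg, neg_dotProduct_neg]
  rw [hnorm] at hb
  have hbc : b ≠ c := by
    rintro rfl
    simp at hb
  have hbsurv : surv b := by
    rw [hsurv]
    intro e
    have he : e ∈ ({b, c} : Finset A) := univ_eq_pair_of_card_eq_two hcard hbc ▸ mem_univ e
    rcases Finset.mem_insert.mp he with rfl | he
    · simp
    · rw [Finset.mem_singleton.mp he, ← neg_sub (z b) (z c), dotProduct_neg]
      have : 0 ≤ γ * √((z b - z c) ⬝ᵥ G⁻¹ *ᵥ (z b - z c)) := by positivity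
      linarith
  have hp := hone b hbsurv ⟨c, hc⟩
  exact ⟨b, c, hbc, hb, by simp [hp], by simp [hp, hbc.symm]⟩

/-- The expected regret of a round, against any arm, is controlled by the covariance of the played features. -/
lemma expected_regret_le_trace_covariance (hcard : Fintype.card A = 2) (hG : G.PosDef)
    (hγ : 0 ≤ γ) {θ : n → ℝ}
    (hest : √((θh - θ) ⬝ᵥ G *ᵥ (θh - θ)) ≤ γ)
    (hsurv : ∀ b, surv b ↔ ∀ c, θh ⬝ᵥ (z c - z b) ≤ γ * √((z b - z c) ⬝ᵥ G⁻¹ *ᵥ (z b - z c)))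
    (hboth : (∀ b, surv b) → ∀ b, p b = 1 / 2)
    (hone : ∀ b, surv b → (∃ c, ¬ surv c) → ∀ c, p c = if c = b then 1 else 0)
    (o : A) :
    θ ⬝ᵥ z o - θ ⬝ᵥ ∑ b, p b • z b ≤ 2 * γ * √((G⁻¹ * (∑ b, p b • vecMulVec (z b) (z b) -
      vecMulVec (∑ b, p b • z b) (∑ b, p b • z b))).trace) := by
  have hest' : ∀ y, (θh - θ) ⬝ᵥ y ≤ γ * √(y ⬝ᵥ G⁻¹ *ᵥ y) := fun y =>
    (hG.dotProduct_le_sqrt_mul_sqrt_inv _ y).trans (by gcongr)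
  rcases uniform_or_deterministic_of_elimination hcard hγ hsurv hboth hone with
    ⟨hall, hp⟩ | ⟨b, c, hbc, hlt, hpb, hpc⟩
  · obtain ⟨c, hc⟩ : ∃ c, o ≠ c := by
      have : Nontrivial A := Fintype.one_lt_card_iff_nontrivial.mp (by omega)
      exact (exists_ne o).imp fun _ h => h.symm
    have hcov : ∑ b, p b • vecMulVec (z b) (z b) -
        vecMulVec (∑ b, p b • z b) (∑ b, p b • z b) =
        (1 / 4 : ℝ) • vecMulVec (z o - z c) (z o - z c) := by
      rw [univ_eq_pair_of_card_eq_two hcard hc, Finset.sum_pair hc, Finset.sum_pair hc, hp, hp]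
      ext i j
      simp only [Matrix.sub_apply, Matrix.add_apply, Matrix.smul_apply, vecMulVec_apply,
        Pi.add_apply, Pi.sub_apply, Pi.smul_apply, smul_eq_mul]
      ring
    have htr : (G⁻¹ * ((1 / 4 : ℝ) • vecMulVec (z o - z c) (z o - z c))).trace =
        (1 / 2) ^ 2 * ((z o - z c) ⬝ᵥ G⁻¹ *ᵥ (z o - z c)) := by
      rw [Matrix.mul_smul, Matrix.trace_smul, Matrix.mul_vecMulVec, Matrix.trace_vecMulVec,
        dotProduct_comm, smul_eq_mul]
      norm_num
    rw [hcov, htr, Real.sqrt_mul (by norm_num), Real.sqrt_sq (by norm_num),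
      univ_eq_pair_of_card_eq_two hcard hc, Finset.sum_pair hc, hp, hp]
    have h₁ := (hsurv c).mp (hall c) o
    have h₂ := hest' (z c - z o)
    have hnorm : (z c - z o) ⬝ᵥ G⁻¹ *ᵥ (z c - z o) = (z o - z c) ⬝ᵥ G⁻¹ *ᵥ (z o - z c) := by
      rw [← neg_sub (z o) (z c), Matrix.mulVec_neg, neg_dotProduct_neg]
    rw [hnorm] at h₁ h₂
    simp only [sub_dotProduct, dotProduct_sub, dotProduct_add, dotProduct_smul,
      smul_eq_mul] at h₁ h₂ ⊢
    linarith
  · have h := hest' (z b - z c)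
    have hle : θ ⬝ᵥ z o ≤ θ ⬝ᵥ z b := by
      have ho' : o ∈ ({b, c} : Finset A) := univ_eq_pair_of_card_eq_two hcard hbc ▸ mem_univ o
      rcases Finset.mem_insert.mp ho' with rfl | ho'
      · exact le_rfl
      · rw [Finset.mem_singleton.mp ho']
        simp only [sub_dotProduct, dotProduct_sub] at h hlt
        linarith
    have hmean : ∑ e, p e • z e = z b := by
      rw [univ_eq_pair_of_card_eq_two hcard hbc, Finset.sum_pair hbc, hpb, hpc]
      simp
    rw [hmean]
    exact (sub_nonpos.mpr hle).trans (by positivity)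

/-- Played arms deviate from the mean reward by at most one. -/
lemma abs_mean_sub_played_le_one (hcard : Fintype.card A = 2) (hγ : 0 ≤ γ) {θ : n → ℝ}
    (hsurv : ∀ b, surv b ↔ ∀ c, θh ⬝ᵥ (z c - z b) ≤ γ * √((z b - z c) ⬝ᵥ G⁻¹ *ᵥ (z b - z c)))
    (hboth : (∀ b, surv b) → ∀ b, p b = 1 / 2)
    (hone : ∀ b, surv b → (∃ c, ¬ surv c) → ∀ c, p c = if c = b then 1 else 0)
    (hbd : ∀ b, |θ ⬝ᵥ z b| ≤ 1) {e : A} (he : p e ≠ 0) :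
    |∑ b, p b * (θ ⬝ᵥ z b) - θ ⬝ᵥ z e| ≤ 1 := by
  rcases uniform_or_deterministic_of_elimination hcard hγ hsurv hboth hone with
    ⟨-, hp⟩ | ⟨b, c, hbc, -, hpb, hpc⟩
  · obtain ⟨c, hc⟩ : ∃ c, e ≠ c := by
      have : Nontrivial A := Fintype.one_lt_card_iff_nontrivial.mp (by omega)
      exact (exists_ne e).imp fun _ h => h.symm
    rw [univ_eq_pair_of_card_eq_two hcard hc, Finset.sum_pair hc, hp, hp]
    have h₁ := abs_le.mp (hbd e)
    have h₂ := abs_le.mp (hbd c)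
    exact abs_le.mpr ⟨by linarith, by linarith⟩
  · have he' : e ∈ ({b, c} : Finset A) := univ_eq_pair_of_card_eq_two hcard hbc ▸ mem_univ e
    rcases Finset.mem_insert.mp he' with rfl | he'
    · rw [univ_eq_pair_of_card_eq_two hcard hbc, Finset.sum_pair hbc, hpb, hpc]
      simp
    · exact absurd (Finset.mem_singleton.mp he' ▸ hpc) he

end TwoArmRound

section Probability

variable {Ω : Type*} {m m0 : MeasurableSpace Ω} {μ : Measure Ω} [IsProbabilityMeasure μ]

/-- Moment generating function bound for bounded martingale differences. -/
lemma integrable_exp_sum_and_integral_le {ℱ : Filtration ℕ m0} {D : ℕ → Ω → ℝ}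
    (hmeas : ∀ t, Measurable[ℱ (t + 1)] (D t)) (hbd : ∀ t, ∀ᵐ ω ∂μ, |D t ω| ≤ 1)
    (hcent : ∀ t, μ[D t | ℱ t] =ᵐ[μ] 0) (s : ℝ) (k : ℕ) :
    Integrable (fun ω => Real.exp (s * ∑ t ∈ range k, D t ω)) μ ∧
      ∫ ω, Real.exp (s * ∑ t ∈ range k, D t ω) ∂μ ≤ Real.exp (k * (s ^ 2 / 2)) := by
  have hmeas0 : ∀ t, Measurable (D t) := fun t => (hmeas t).mono (ℱ.le _) le_rfl
  have hsum : ∀ k, Measurable[ℱ k] fun ω => Real.exp (s * ∑ t ∈ range k, D t ω) := fun k =>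
    Real.measurable_exp.comp (Measurable.const_mul (Finset.measurable_fun_sum _ fun t ht =>
      (hmeas t).mono (ℱ.mono (Finset.mem_range.mp ht)) le_rfl) s)
  induction k with
  | zero => simp
  | succ k ih =>
    obtain ⟨hint, hle⟩ := ih
    set E : Ω → ℝ := fun ω => Real.exp (s * ∑ t ∈ range k, D t ω) with hE
    have hDint : Integrable (D k) μ :=
      Integrable.of_bound (hmeas0 k).aestronglyMeasurable 1 (by simpa using hbd k)
    have hEDint : Integrable (fun ω => E ω * D k ω) μ :=
      hint.mul_bdd (c := 1) (hmeas0 k).aestronglyMeasurable (by simpa using hbd k)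
    have hED : ∫ ω, E ω * D k ω ∂μ = 0 := by
      rw [← integral_condExp (ℱ.le k)]
      have h := condExp_mul_of_stronglyMeasurable_left (hsum k).stronglyMeasurable hEDint hDint
      rw [integral_congr_ae (g := 0)]
      · simp
      · filter_upwards [h, hcent k] with ω h₁ h₂
        refine h₁.trans ?_
        simp [h₂]
    have hpt : ∀ᵐ ω ∂μ, Real.exp (s * ∑ t ∈ range (k + 1), D t ω) ≤
        Real.cosh s * E ω + Real.sinh s * (E ω * D k ω) := by
      filter_upwards [hbd k] with ω hω
      rw [Finset.sum_range_succ, mul_add, Real.exp_add, mul_comm s (D k ω)]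
      have := mul_le_mul_of_nonneg_left (Real.exp_mul_le_cosh_add_mul_sinh hω s)
        (Real.exp_pos (s * ∑ t ∈ range k, D t ω)).le
      simp only [hE]
      linarith
    have hbig : Integrable (fun ω => Real.cosh s * E ω + Real.sinh s * (E ω * D k ω)) μ :=
      (hint.const_mul _).add (hEDint.const_mul _)
    have hint' : Integrable (fun ω => Real.exp (s * ∑ t ∈ range (k + 1), D t ω)) μ := by
      refine hbig.mono' ((hsum (k + 1)).mono (ℱ.le _) le_rfl).aestronglyMeasurable ?_
      simpa using hpt
    refine ⟨hint', (integral_mono_ae hint' hbig hpt).trans ?_⟩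
    rw [integral_add (hint.const_mul _) (hEDint.const_mul _), integral_const_mul,
      integral_const_mul, hED, mul_zero, add_zero, Nat.cast_succ, add_mul, one_mul, Real.exp_add,
      mul_comm]
    exact mul_le_mul hle (Real.cosh_le_exp_half_sq s) (Real.cosh_pos s).le (Real.exp_pos _).le

/-- Azuma–Hoeffding for martingale differences bounded by one. -/
lemma one_sub_le_measure_sum_le {ℱ : Filtration ℕ m0} {D : ℕ → Ω → ℝ}
    (hmeas : ∀ t, Measurable[ℱ (t + 1)] (D t)) (hbd : ∀ t, ∀ᵐ ω ∂μ, |D t ω| ≤ 1)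
    (hcent : ∀ t, μ[D t | ℱ t] =ᵐ[μ] 0) {δ : ℝ} (hδ : 0 < δ) (hδ1 : δ < 1) (k : ℕ) :
    ENNReal.ofReal (1 - δ) ≤
      μ {ω | ∑ t ∈ range k, D t ω ≤ √(2 * k * Real.log (1 / δ))} := by
  have hL : 0 < Real.log (1 / δ) := Real.log_pos (by rw [lt_div_iff₀ hδ]; linarith)
  rcases Nat.eq_zero_or_pos k with rfl | hk
  · simpa using hδ.le
  have hk' : (0 : ℝ) < k := by exact_mod_cast hk
  set ε := √(2 * k * Real.log (1 / δ)) with hε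
  have hε2 : ε ^ 2 = 2 * k * Real.log (1 / δ) := Real.sq_sqrt (by positivity)
  obtain ⟨hint, hle⟩ := integrable_exp_sum_and_integral_le hmeas hbd hcent (ε / k) k
  have hchern : μ.real {ω | ε ≤ ∑ t ∈ range k, D t ω} ≤ δ := by
    refine (measure_ge_le_exp_mul_mgf ε (by positivity) hint).trans ?_
    refine (mul_le_mul_of_nonneg_left hle (Real.exp_pos _).le).trans ?_
    rw [← Real.exp_add]
    have : -(ε / k) * ε + k * ((ε / k) ^ 2 / 2) = Real.log δ := by
      have h : -(ε / k) * ε + k * ((ε / k) ^ 2 / 2) = -(ε ^ 2 / (2 * k)) := by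
        field_simp
        ring
      rw [h, hε2, one_div, Real.log_inv]
      field_simp
    rw [this, Real.exp_log hδ]
  have hSmeas : Measurable fun ω => ∑ t ∈ range k, D t ω :=
    Finset.measurable_fun_sum _ fun t _ => (hmeas t).mono (ℱ.le _) le_rfl
  have hcompl : 1 - μ.real {ω | ε ≤ ∑ t ∈ range k, D t ω} ≤
      μ.real {ω | ∑ t ∈ range k, D t ω ≤ ε} := by
    rw [← probReal_compl_eq_one_sub (measurableSet_le measurable_const hSmeas)]
    refine measureReal_mono fun ω hω => ?_
    simp only [Set.mem_compl_iff, Set.mem_ofPred_eq, not_le] at hω ⊢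
    exact hω.le
  rw [← ENNReal.ofReal_toReal (measure_ne_top μ _)]
  exact ENNReal.ofReal_le_ofReal (by change 1 - δ ≤ μ.real _; linarith)

section ConditionalLaw

variable {A : Type*} [DecidableEq A] [MeasurableSpace A] [MeasurableSingletonClass A]
  {a : Ω → A} {p : Ω → A → ℝ}

lemma integrable_indicator_eq (ha : Measurable a) (b : A) :
    Integrable (fun ω => if a ω = b then (1 : ℝ) else 0) μ := by
  refine Integrable.of_bound (C := 1) ?_ (ae_of_all _ fun ω => ?_)
  · exact (Measurable.ite (ha (measurableSet_singleton b)) measurable_const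
      measurable_const).aestronglyMeasurable
  · split_ifs <;> simp

/-- Almost surely, the drawn value has positive conditional probability. -/
lemma ae_conditional_law_ne_zero [Fintype A] (hm : m ≤ m0) (ha : Measurable a)
    (hpmeas : ∀ b, Measurable[m] fun ω => p ω b)
    (hlaw : ∀ b, μ[(fun ω => if a ω = b then (1 : ℝ) else 0) | m] =ᵐ[μ] fun ω => p ω b) :
    ∀ᵐ ω ∂μ, p ω (a ω) ≠ 0 := by
  have hall : ∀ b, ∀ᵐ ω ∂μ, p ω b = 0 → a ω ≠ b := by
    intro b
    set S := {ω | p ω b = 0}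
    have hS : MeasurableSet[m] S := hpmeas b (measurableSet_singleton 0)
    have hzero : ∫ ω in S, (if a ω = b then (1 : ℝ) else 0) ∂μ = 0 := by
      rw [← setIntegral_condExp hm (integrable_indicator_eq ha b) hS,
        setIntegral_congr_ae (g := 0) (hm _ hS)]
      · simp
      · filter_upwards [hlaw b] with ω hω hωS
        rw [hω]
        exact hωS
    rw [integral_eq_zero_iff_of_nonneg (fun ω => by dsimp only; split_ifs <;> simp)
      (integrable_indicator_eq ha b).integrableOn] at hzero
    filter_upwards [(ae_restrict_iff' (hm _ hS)).mp hzero] with ω hω hp hab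
    simpa [hab] using hω hp
  filter_upwards [ae_all_iff.mpr hall] with ω hω h
  exact hω _ h rfl

/-- The conditional mean of a predictable function of the drawn value. -/
lemma condExp_sub_drawn_eq_zero [Fintype A] (hm : m ≤ m0) (ha : Measurable a)
    (hpmeas : ∀ b, Measurable[m] fun ω => p ω b)
    (hlaw : ∀ b, μ[(fun ω => if a ω = b then (1 : ℝ) else 0) | m] =ᵐ[μ] fun ω => p ω b)
    {g : A → Ω → ℝ} (hg : ∀ b, Measurable[m] (g b)) (hgbd : ∀ b ω, |g b ω| ≤ 1) :
    μ[fun ω => ∑ b, p ω b * g b ω - g (a ω) ω | m] =ᵐ[μ] 0 := by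
  have hpint : ∀ b, Integrable (fun ω => p ω b) μ := fun b =>
    integrable_condExp.congr (hlaw b)
  have hterm : ∀ b, Integrable (fun ω => g b ω * (p ω b - if a ω = b then 1 else 0)) μ :=
    fun b => ((hpint b).sub (integrable_indicator_eq ha b)).bdd_mul (c := 1)
      ((hg b).mono hm le_rfl).aestronglyMeasurable (ae_of_all _ fun ω => by simpa using hgbd b ω)
  have heq : (fun ω => ∑ b, p ω b * g b ω - g (a ω) ω) =
      ∑ b, fun ω => g b ω * (p ω b - if a ω = b then 1 else 0) := by
    ext ω
    simp [Finset.sum_apply, mul_sub, Finset.sum_sub_distrib, mul_comm]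
  have hzero : ∀ b, μ[fun ω => g b ω * (p ω b - if a ω = b then 1 else 0) | m] =ᵐ[μ] 0 := by
    intro b
    have h₁ := condExp_mul_of_stronglyMeasurable_left (hg b).stronglyMeasurable (hterm b)
      ((hpint b).sub (integrable_indicator_eq ha b))
    have h₂ := condExp_sub (hpint b) (integrable_indicator_eq (μ := μ) ha b) m
    have h₃ := condExp_of_stronglyMeasurable hm (hpmeas b).stronglyMeasurable (hpint b)
    filter_upwards [h₁, h₂, hlaw b] with ω e₁ e₂ e₃
    refine e₁.trans ?_
    have e₂' := e₂
    rw [Pi.sub_apply, e₃, h₃, sub_self] at e₂'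
    exact mul_eq_zero_of_right _ e₂'
  rw [heq]
  refine (condExp_finsetSum (fun b _ => hterm b) m).trans ?_
  filter_upwards [ae_all_iff.mpr hzero] with ω hω
  rw [Finset.sum_apply]
  exact Finset.sum_eq_zero fun b _ => hω b

end ConditionalLaw

end Probability

/-- **Regret of the elimination strategy, two-action case (Lemma: selection_two_arm).**
Semiparametric contextual bandit with two actions.  At round `t`, an action `b` *survives* if
for every `b'`, `⟨θ̂_t, z_{t,b'} − z_{t,b}⟩ ≤ γ(T) ‖z_{t,b} − z_{t,b'}‖_{Γ_t⁻¹}`; the learner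
plays the surviving action deterministically if the other is eliminated, and otherwise plays
uniformly at random; `π_t` is the resulting action distribution and `μ_t = E_{a∼π_t}[z_{t,a}]`.
Assuming `‖θ̂_t − θ‖_{Γ_t} ≤ γ(T)` for all rounds `t < T`, with probability at least `1 − δ`,
`Reg(T) ≤ √(2T log(1/δ)) + 2γ(T) ∑_{t<T} √(tr(Γ_t⁻¹ Cov_{b∼π_t}(z_{t,b})))`. -/
theorem stmt_17 {Ω : Type*} {m0 : MeasurableSpace Ω} [StandardBorelSpace Ω] [Nonempty Ω]
    (μ : Measure Ω) [IsProbabilityMeasure μ]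
    (ℱ : Filtration ℕ m0)
    {A : Type*} [Fintype A] [DecidableEq A] [Nonempty A] [MeasurableSpace A]
    [MeasurableSingletonClass A]
    (hcard : Fintype.card A = 2)
    {d T : ℕ} (hd : 0 < d)
    (δ lam γ : ℝ) (hδ : 0 < δ) (hδ1 : δ < 1) (hlam : 0 < lam) (hγ : 0 ≤ γ)
    (θ : Fin d → ℝ) (hθ : Real.sqrt (θ ⬝ᵥ θ) ≤ 1)
    -- context features, confounder and noise: adapted, adversarial, bounded
    (z : ℕ → A → Ω → (Fin d → ℝ)) (f : ℕ → Ω → ℝ) (ξ : ℕ → Ω → ℝ)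
    (hzmeas : ∀ t b, Measurable[ℱ t] (z t b))
    (hzbd : ∀ t b ω, Real.sqrt (z t b ω ⬝ᵥ z t b ω) ≤ 1)
    (hfmeas : ∀ t, Measurable[ℱ t] (f t))
    (hfbd : ∀ t ω, f t ω ∈ Set.Icc (-1 : ℝ) 1)
    (hξmeas : ∀ t, Measurable[ℱ (t + 1)] (ξ t))
    (hξbd : ∀ t ω, |ξ t ω| ≤ 1)
    (hξcent : ∀ t, μ[ξ t | ℱ t] =ᵐ[μ] 0)
    -- the action and its conditional distribution
    (a : ℕ → Ω → A) (π : ℕ → Ω → A → ℝ)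
    (hameas : ∀ t, Measurable[ℱ (t + 1)] (a t))
    (hπmeas : ∀ t b, Measurable[ℱ t] (fun ω => π t ω b))
    (hπprob : ∀ t ω, (∀ b, 0 ≤ π t ω b) ∧ (∑ b, π t ω b) = 1)
    (hπlaw : ∀ t b, μ[(fun ω => if a t ω = b then (1 : ℝ) else 0) | ℱ t]
      =ᵐ[μ] fun ω => π t ω b)
    (haξ : ∀ t, CondIndepFun (ℱ t) (ℱ.le t) (a t) (ξ t) μ)
    -- rewards, mean features, estimator, covariance
    (r : ℕ → Ω → ℝ) (hr : ∀ t ω, r t ω = θ ⬝ᵥ z t (a t ω) ω + f t ω + ξ t ω)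
    (mu : ℕ → Ω → (Fin d → ℝ)) (hmu : ∀ t ω, mu t ω = ∑ b, π t ω b • z t b ω)
    (Γ : ℕ → Ω → Matrix (Fin d) (Fin d) ℝ)
    (hΓ : ∀ t ω, Γ t ω = lam • (1 : Matrix (Fin d) (Fin d) ℝ) +
      ∑ τ ∈ Finset.range t,
        vecMulVec (z τ (a τ ω) ω - mu τ ω) (z τ (a τ ω) ω - mu τ ω))
    (θhat : ℕ → Ω → (Fin d → ℝ))
    (hθhat : ∀ t ω, θhat t ω =
      (Γ t ω)⁻¹.mulVec (∑ τ ∈ Finset.range t, r τ ω • (z τ (a τ ω) ω - mu τ ω)))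
    (Cov : ℕ → Ω → Matrix (Fin d) (Fin d) ℝ)
    (hCov : ∀ t ω, Cov t ω =
      (∑ b, π t ω b • vecMulVec (z t b ω) (z t b ω)) - vecMulVec (mu t ω) (mu t ω))
    -- the surviving (non-eliminated) actions and the action-selection rule
    (surv : ℕ → Ω → A → Prop)
    (hsurv : ∀ t ω b, surv t ω b ↔ ∀ b',
      θhat t ω ⬝ᵥ (z t b' ω - z t b ω) ≤
        γ * Real.sqrt ((z t b ω - z t b' ω) ⬝ᵥ (Γ t ω)⁻¹.mulVec (z t b ω - z t b' ω)))
    (hπboth : ∀ t ω, (∀ b, surv t ω b) → ∀ b, π t ω b = 1 / 2)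
    (hπone : ∀ t ω b, surv t ω b → (∃ b', ¬ surv t ω b') →
      ∀ b', π t ω b' = if b' = b then 1 else 0)
    -- the optimal action and the assumed estimator guarantee
    (astar : ℕ → Ω → A) (hastar : ∀ t ω b, θ ⬝ᵥ z t b ω ≤ θ ⬝ᵥ z t (astar t ω) ω)
    (hest : ∀ ω, ∀ t < T,
      Real.sqrt ((θhat t ω - θ) ⬝ᵥ (Γ t ω).mulVec (θhat t ω - θ)) ≤ γ) :
    ENNReal.ofReal (1 - δ) ≤
      μ {ω | ∑ t ∈ Finset.range T, θ ⬝ᵥ (z t (astar t ω) ω - z t (a t ω) ω) ≤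
        Real.sqrt (2 * T * Real.log (1 / δ)) +
          2 * γ * ∑ t ∈ Finset.range T, Real.sqrt (((Γ t ω)⁻¹ * Cov t ω).trace)} := by
  have hposdef : ∀ t ω, (Γ t ω).PosDef := fun t ω => by
    rw [hΓ]
    exact posDef_smul_one_add_sum_vecMulVec hlam _ _
  have hmono : ∀ t, ℱ t ≤ ℱ (t + 1) := fun t => ℱ.mono t.le_succ
  have hgmeas : ∀ t b, Measurable[ℱ t] fun ω => θ ⬝ᵥ z t b ω := fun t b =>
    Finset.measurable_fun_sum _ fun i _ =>
      Measurable.const_mul ((measurable_pi_apply i).comp (hzmeas t b)) (θ i)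
  have hgbd : ∀ t b ω, |θ ⬝ᵥ z t b ω| ≤ 1 := fun t b ω =>
    dotProduct_le_one_of_sqrt_le_one hθ (hzbd t b ω)
  have hameas0 : ∀ t, Measurable (a t) := fun t => (hameas t).mono (ℱ.le _) le_rfl
  set D : ℕ → Ω → ℝ := fun t ω =>
    ∑ b, π t ω b * (θ ⬝ᵥ z t b ω) - θ ⬝ᵥ z t (a t ω) ω with hD
  have hDmeas : ∀ t, Measurable[ℱ (t + 1)] (D t) := by
    intro t
    have hdrawn : (fun ω => θ ⬝ᵥ z t (a t ω) ω) =
        fun ω => ∑ b, if a t ω = b then θ ⬝ᵥ z t b ω else 0 := by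
      ext ω
      simp
    refine Measurable.sub (Finset.measurable_fun_sum _ fun b _ => ?_) ?_
    · exact ((hπmeas t b).mul (hgmeas t b)).mono (hmono t) le_rfl
    · rw [hdrawn]
      exact Finset.measurable_fun_sum _ fun b _ =>
        Measurable.ite (hameas t (measurableSet_singleton b))
          ((hgmeas t b).mono (hmono t) le_rfl) measurable_const
  have hDbd : ∀ t, ∀ᵐ ω ∂μ, |D t ω| ≤ 1 := by
    intro t
    filter_upwards [ae_conditional_law_ne_zero (ℱ.le t) (hameas0 t) (hπmeas t) (hπlaw t)]
      with ω hω
    exact abs_mean_sub_played_le_one hcard hγ (hsurv t ω) (hπboth t ω) (hπone t ω)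
      (fun b => hgbd t b ω) hω
  have hDcent : ∀ t, μ[D t | ℱ t] =ᵐ[μ] 0 := fun t =>
    condExp_sub_drawn_eq_zero (ℱ.le t) (hameas0 t) (hπmeas t) (hπlaw t) (hgmeas t) (hgbd t)
  refine (one_sub_le_measure_sum_le hDmeas hDbd hDcent hδ hδ1 T).trans (measure_mono ?_)
  intro ω hω
  simp only [Set.mem_ofPred_eq] at hω ⊢
  refine le_trans ?_ (add_le_add_left hω _)
  rw [Finset.mul_sum, ← Finset.sum_add_distrib]
  refine Finset.sum_le_sum fun t ht => ?_
  have hround := expected_regret_le_trace_covariance hcard (hposdef t ω) hγ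
    (hest ω t (Finset.mem_range.mp ht)) (hsurv t ω) (hπboth t ω) (hπone t ω) (astar t ω)
  rw [← hmu, ← hCov] at hround
  have hmean : θ ⬝ᵥ mu t ω = ∑ b, π t ω b * (θ ⬝ᵥ z t b ω) := by
    rw [hmu, dotProduct_sum]
    simp only [dotProduct_smul, smul_eq_mul]
  simp only [hD, dotProduct_sub]
  linarith
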